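/- arXiv:1701.02250 — 3 statements merged into one kernel-verified Lean document; each statement's English description precedes it below -/
import Mathlib

section
/- Let J be a small category and C a category having all limits of shape J. Then Fam C has all limits of shape J. (In particular, if C has pullbacks then Fam C has pullbacks.) -/
open CategoryTheory Limits

universe v u

/-- The free coproduct completion of `C`: objects are families of objects of `C`
indexed by a type. -/
structure Fam (C : Type u) [Category.{v} C] : Type (max u 1) where
  idx : Type
  fam : idx → C

namespace Fam

variable {C : Type u} [Category.{v} C]

/-- Morphisms in `Fam C`. -/
structure Hom (X Y : Fam C) : Type v where
  base : X.idx → Y.idx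
  fiber : ∀ i, X.fam i ⟶ Y.fam (base i)

instance : Category.{v} (Fam C) where
  Hom X Y := Hom X Y
  id X := ⟨fun i => i, fun i => 𝟙 (X.fam i)⟩
  comp f g := ⟨fun i => g.base (f.base i), fun i => f.fiber i ≫ g.fiber (f.base i)⟩
  id_comp f := by cases f; simp
  comp_id f := by cases f; simp
  assoc f g h := by cases f; cases g; cases h; simp

end Fam

/-- The singleton embedding `σ : C ⥤ Fam C`. -/
def famSingleton (C : Type u) [Category.{v} C] : C ⥤ Fam C where
  obj X := ⟨PUnit, fun _ => X⟩
  map u := ⟨fun i => i, fun _ => u⟩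
  map_id _ := rfl
  map_comp _ _ := rfl

namespace Fam

section LimitConstruction

variable {C : Type u} [Category.{v} C]

/-- The fibre of a morphism, transported along an equation of indices. -/
def fib {X Y : Fam C} (f : X ⟶ Y) (i : X.idx) (k : Y.idx) (h : Hom.base f i = k) :
    X.fam i ⟶ Y.fam k :=
  Hom.fiber f i ≫ eqToHom (congrArg Y.fam h)

theorem fib_rfl {X Y : Fam C} (f : X ⟶ Y) (i : X.idx) :
    fib f i (Hom.base f i) rfl = Hom.fiber f i := by
  simp [fib]

theorem fib_id {X : Fam C} (i : X.idx) (h : Hom.base (𝟙 X) i = i) :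
    fib (𝟙 X) i i h = 𝟙 (X.fam i) :=
  fib_rfl (𝟙 X) i

theorem fib_comp {X Y Z : Fam C} (f : X ⟶ Y) (g : Y ⟶ Z) (i : X.idx) (j : Y.idx) (k : Z.idx)
    (h₁ : Hom.base f i = j) (h₂ : Hom.base g j = k) (h : Hom.base (f ≫ g) i = k) :
    fib (f ≫ g) i k h = fib f i j h₁ ≫ fib g j k h₂ := by
  subst h₁
  subst h₂
  rw [fib_rfl, fib_rfl]
  exact fib_rfl (f ≫ g) i

theorem fib_congr {X Y : Fam C} {f g : X ⟶ Y} (e : f = g) (i : X.idx) (k : Y.idx)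
    (h : Hom.base f i = k) (h' : Hom.base g i = k) : fib f i k h = fib g i k h' := by
  subst e
  rfl

theorem hom_ext_fib {X Y : Fam C} {f g : X ⟶ Y} (hb : ∀ i, Hom.base f i = Hom.base g i)
    (hf : ∀ i, fib f i (Hom.base g i) (hb i) = Hom.fiber g i) : f = g := by
  obtain ⟨b, φ⟩ := f
  obtain ⟨b', φ'⟩ := g
  obtain rfl : b = b' := funext hb
  obtain rfl : φ = φ' := funext fun i => (fib_rfl (X := X) (Y := Y) ⟨b, φ⟩ i).symm.trans (hf i)
  rfl

variable {J : Type} [SmallCategory J] (F : J ⥤ Fam C)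

/-- Compatible families of indices. -/
def LimIdx : Type :=
  { x : ∀ j, (F.obj j).idx // ∀ {j k : J} (f : j ⟶ k), Hom.base (F.map f) (x j) = x k }

/-- The diagram in `C` over a compatible family of indices. -/
def diag (x : LimIdx F) : J ⥤ C where
  obj j := (F.obj j).fam (x.1 j)
  map {j k} f := fib (F.map f) (x.1 j) (x.1 k) (x.2 f)
  map_id j := (fib_congr (F.map_id j) _ _ _ rfl).trans (fib_id _ _)
  map_comp {i j k} f g :=
    (fib_congr (F.map_comp f g) _ _ _ (by rw [← F.map_comp]; exact x.2 _)).trans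
      (fib_comp _ _ _ _ _ (x.2 f) (x.2 g) _)

variable [HasLimitsOfShape J C]

/-- The limit object. -/
noncomputable def limPt : Fam C := ⟨LimIdx F, fun x => limit (diag F x)⟩

/-- The projections. -/
noncomputable def limProj (j : J) : limPt F ⟶ F.obj j :=
  Hom.mk (X := limPt F) (fun x => x.1 j) (fun x => limit.π (diag F x) j)

theorem limProj_comp {j k : J} (f : j ⟶ k) : limProj F j ≫ F.map f = limProj F k := by
  refine hom_ext_fib (fun x => x.2 f) (fun x => ?_)
  refine (fib_comp (limProj F j) (F.map f) x (x.1 j) (x.1 k) rfl (x.2 f) (x.2 f)).trans ?_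
  exact (congrArg (· ≫ _) (fib_rfl (limProj F j) x)).trans (limit.w (diag F x) f)

/-- The limit cone. -/
noncomputable def limCone : Cone F where
  pt := limPt F
  π :=
    { app := limProj F
      naturality := fun j k f => by
        rw [limProj_comp]
        exact Category.id_comp _ }

theorem limPt_hom_ext {X : Fam C} (m m' : X ⟶ limPt F)
    (h : ∀ j, m ≫ limProj F j = m' ≫ limProj F j) : m = m' := by
  obtain ⟨b, φ⟩ := m
  obtain ⟨b', φ'⟩ := m'
  obtain rfl : b = b' := by
    funext i
    refine Subtype.ext (funext fun j => ?_)
    exact congrFun (congrArg Hom.base (h j)) i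
  obtain rfl : φ = φ' := by
    funext i
    refine limit.hom_ext fun j => ?_
    have hj := h j
    injection hj with _ h2
    exact congrFun h2 i
  rfl

theorem cone_base (s : Cone F) (i : s.pt.idx) {j k : J} (f : j ⟶ k) :
    Hom.base (F.map f) (Hom.base (s.π.app j) i) = Hom.base (s.π.app k) i :=
  congrFun (congrArg Hom.base (s.w f)) i

/-- The index of the lift. -/
def liftIdx (s : Cone F) (i : s.pt.idx) : LimIdx F :=
  ⟨fun j => Hom.base (s.π.app j) i, fun f => cone_base F s i f⟩

/-- The cone in `C` at an index of the vertex. -/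
def fibCone (s : Cone F) (i : s.pt.idx) : Cone (diag F (liftIdx F s i)) where
  pt := s.pt.fam i
  π :=
    { app := fun j => Hom.fiber (s.π.app j) i
      naturality := fun j k f => by
        refine (Category.id_comp _).trans ?_
        have h1 := fib_comp (s.π.app j) (F.map f) i _ _ rfl (cone_base F s i f)
          (cone_base F s i f)
        rw [fib_congr (s.w f) i _ _ rfl, fib_rfl, fib_rfl] at h1
        exact h1 }

/-- The lift. -/
noncomputable def limLift (s : Cone F) : s.pt ⟶ limPt F :=
  Hom.mk (Y := limPt F) (liftIdx F s) (fun i => limit.lift _ (fibCone F s i))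

theorem limLift_fac (s : Cone F) (j : J) : limLift F s ≫ limProj F j = s.π.app j := by
  refine hom_ext_fib (fun i => rfl) (fun i => ?_)
  refine (fib_rfl (limLift F s ≫ limProj F j) i).trans ?_
  exact limit.lift_π (fibCone F s i) j

/-- The limit cone is a limit. -/
noncomputable def limConeIsLimit : IsLimit (limCone F) where
  lift s := limLift F s
  fac s j := limLift_fac F s j
  uniq s m h := limPt_hom_ext F _ _ fun j => (h j).trans (limLift_fac F s j).symm

end LimitConstruction

end Fam

theorem Fam.hasLimitsOfShape (C : Type u) [Category.{v} C] (J : Type) [SmallCategory J]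
    [HasLimitsOfShape J C] : HasLimitsOfShape J (Fam C) := by
  exact ⟨fun F => ⟨⟨⟨Fam.limCone F, Fam.limConeIsLimit F⟩⟩⟩⟩
end

section
/- Let C be a category. An object (I, F) of Fam C is connected if and only if I has exactly one element (i.e., I is nonempty and a subsingleton). -/
open CategoryTheory Limits

universe v u

/-- An object `X` is connected if `Hom(X, -)` preserves all small coproducts. -/
def IsConnectedObj {D : Type u} [Category.{v} D] (X : D) : Prop :=
  ∀ (J : Type), PreservesColimitsOfShape (Discrete J) (coyoneda.obj (Opposite.op X))

namespace Fam

variable {C : Type u} [Category.{v} C]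

/-- The coproduct object in `Fam C`. -/
abbrev sigmaObj {J : Type} (f : J → Fam C) : Fam C :=
  ⟨Σ j, (f j).idx, fun p => (f p.1).fam p.2⟩

/-- The coproduct cofan in `Fam C`. -/
def sigmaCofan {J : Type} (f : J → Fam C) : Cofan f :=
  Cofan.mk (sigmaObj f)
    (fun j => (⟨fun i => ⟨j, i⟩, fun i => 𝟙 ((f j).fam i)⟩ : Hom (f j) (sigmaObj f)))

theorem hom_ext' {X Y : Fam C} (f g : Hom X Y) (h : ∀ i, f.base i = g.base i)
    (h' : ∀ i, HEq (f.fiber i) (g.fiber i)) : f = g := by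
  obtain ⟨fb, ff⟩ := f
  obtain ⟨gb, gf⟩ := g
  obtain rfl : fb = gb := funext h
  obtain rfl : ff = gf := funext fun i => eq_of_heq (h' i)
  rfl

theorem base_congr {X Y : Fam C} {f g : Hom X Y} (h : f = g) (i : X.idx) :
    f.base i = g.base i := by rw [h]

theorem fiber_congr {X Y : Fam C} {f g : Hom X Y} (h : f = g) (i : X.idx) :
    HEq (f.fiber i) (g.fiber i) := by rw [h]

/-- The coproduct cofan is a colimit. -/
def sigmaCofanIsColimit {J : Type} (f : J → Fam C) : IsColimit (sigmaCofan f) :=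
  Cofan.IsColimit.mk _
    (fun t => (⟨fun p => Hom.base (t.inj p.1) p.2, fun p => Hom.fiber (t.inj p.1) p.2⟩ :
      Hom (sigmaObj f) t.pt))
    (fun t j => hom_ext' _ _ (fun i => rfl) (fun i => heq_of_eq (Category.id_comp _)))
    (fun t m hm => hom_ext' _ _ (fun (p : Σ j, (f j).idx) => base_congr (hm p.1) p.2)
      (fun (p : Σ j, (f j).idx) => (heq_of_eq (Category.id_comp _).symm).trans (fiber_congr (hm p.1) p.2)))

/-- Rebuild a map out of a one-element family from its value at `a`. -/
def rebuild {X Y : Fam C} [Subsingleton X.idx] (a : X.idx) (k : Y.idx)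
    (u : X.fam a ⟶ Y.fam k) : X ⟶ Y :=
  (⟨fun _ => k, fun i => eqToHom (congrArg X.fam (Subsingleton.elim i a)) ≫ u⟩ : Hom X Y)

theorem rebuild_eq {X Y : Fam C} [Subsingleton X.idx] (a : X.idx) (g : X ⟶ Y) :
    rebuild a (Hom.base g a) (Hom.fiber g a) = g := by
  refine hom_ext' _ _ (fun i => ?_) (fun i => ?_)
  · obtain rfl := Subsingleton.elim i a
    rfl
  · obtain rfl := Subsingleton.elim i a
    exact heq_of_eq (Category.id_comp _)

/-- A map from a one-element family into a coproduct factors through a summand. -/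
theorem rebuild_inj {J : Type} (f : J → Fam C) {X : Fam C} [Subsingleton X.idx] (a : X.idx)
    (h : X ⟶ sigmaObj f) :
    rebuild a (Hom.base h a).2 (Hom.fiber h a) ≫ (sigmaCofan f).inj (Hom.base h a).1 = h := by
  refine hom_ext' _ _ (fun i => ?_) (fun i => ?_)
  · obtain rfl := Subsingleton.elim i a
    rfl
  · obtain rfl := Subsingleton.elim i a
    refine heq_of_eq ((Category.comp_id _).trans (Category.id_comp _))

/-- Coproduct cofans are preserved by homs out of a one-element family. -/
def coyonedaIsColimit {J : Type} (f : J → Fam C) (X : Fam C) [Subsingleton X.idx] (a : X.idx) :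
    IsColimit (Cofan.mk _ fun j => (coyoneda.obj (Opposite.op X)).map ((sigmaCofan f).inj j) :
      Cofan fun j => (coyoneda.obj (Opposite.op X)).obj (f j)) :=
  Cofan.IsColimit.mk _
    (fun t => ↾fun (h : X ⟶ sigmaObj f) =>
      t.inj (Hom.base h a).1 (rebuild a (Hom.base h a).2 (Hom.fiber h a)))
    (fun t j => by
      ext (g : X ⟶ f j)
      have e : rebuild a (Hom.base g a) (Hom.fiber g a ≫ 𝟙 _) = g := by
        rw [Category.comp_id, rebuild_eq]
      exact congrArg (t.inj j) e)
    (fun t m hm => by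
      ext (h : X ⟶ sigmaObj f)
      have := ConcreteCategory.congr_hom (hm (Hom.base h a).1)
        (rebuild a (Hom.base h a).2 (Hom.fiber h a))
      exact (congrArg m (rebuild_inj f a h)).symm.trans this)

end Fam

theorem Fam.connected_iff (C : Type u) [Category.{v} C] (X : Fam C) :
    IsConnectedObj X ↔ (Nonempty X.idx ∧ Subsingleton X.idx) := by
  constructor
  · intro H
    let f : X.idx → Fam C := fun i => (famSingleton C).obj (X.fam i)
    have := H X.idx
    have hc := isColimitOfPreserves (coyoneda.obj (Opposite.op X)) (Fam.sigmaCofanIsColimit f)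
    let t : X ⟶ Fam.sigmaObj f :=
      (⟨fun i => ⟨i, PUnit.unit⟩, fun i => 𝟙 (X.fam i)⟩ : Fam.Hom X (Fam.sigmaObj f))
    obtain ⟨⟨j⟩, y, hy⟩ := Types.jointly_surjective_of_isColimit hc t
    have key : ∀ i, j = i := fun i => congrArg Sigma.fst (Fam.base_congr hy i)
    exact ⟨⟨j⟩, ⟨fun a b => (key a).symm.trans (key b)⟩⟩
  · rintro ⟨⟨a⟩, hs⟩ J
    have (f : J → Fam C) :
        PreservesColimit (Discrete.functor f) (coyoneda.obj (Opposite.op X)) :=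
      preservesColimit_of_preserves_colimit_cocone (Fam.sigmaCofanIsColimit f)
        ((Cofan.isColimitMapCoconeEquiv _ _ _).symm (Fam.coyonedaIsColimit f X a))
    exact preservesColimitsOfShape_of_discrete _
end

section
/- Let C be a finitary extensive category. An object X of C has the property that Hom(X, −) : C ⥤ Type preserves finite coproducts if and only if for every binary coproduct decomposition X ≅ X₁ ⨿ X₂, exactly one of X₁, X₂ is not initial. -/
open CategoryTheory Limits

universe v u

theorem aux_initial_of_hom {C : Type u} [Category.{v} C] [FinitaryExtensive C] {Y Z : C}
    (hZ : IsInitial Z) (f : Y ⟶ Z) : Nonempty (IsInitial Y) := by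
  have := hZ.isIso_to f
  exact ⟨hZ.ofIso (asIso f).symm⟩

theorem aux_disjoint {C : Type u} [Category.{v} C] [FinitaryExtensive C] {W Y Z : C}
    (f : W ⟶ Y) (g : W ⟶ Z) (h : f ≫ (coprod.inl : Y ⟶ Y ⨿ Z) = g ≫ coprod.inr) :
    Nonempty (IsInitial W) := by
  have hp := FinitaryExtensive.isPullback_initial_to_binaryCofan (coprodIsCoprod Y Z)
  exact aux_initial_of_hom initialIsInitial (hp.lift f g h)

theorem aux_forward {C : Type u} [Category.{v} C] [FinitaryExtensive C] (X : C)
    (H : ∀ (J : Type) [Finite J],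
        PreservesColimitsOfShape (Discrete J) (coyoneda.obj (Opposite.op X)))
    (X₁ X₂ : C) (e : X ≅ X₁ ⨿ X₂) :
    Xor' (¬ Nonempty (IsInitial X₁)) (¬ Nonempty (IsInitial X₂)) := by
  have h0 := H PEmpty
  have h2 := H WalkingPair
  have hne : ¬ (Nonempty (IsInitial X₁) ∧ Nonempty (IsInitial X₂)) := by
    rintro ⟨⟨i₁⟩, ⟨i₂⟩⟩
    have := isColimitOfHasInitialOfPreservesColimit (coyoneda.obj (Opposite.op X))
    have hE : IsEmpty (X ⟶ ⊥_ C) := (Types.initial_iff_empty _).1 ⟨this⟩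
    exact hE.false (e.hom ≫ coprod.desc (i₁.to _) (i₂.to _))
  have hc := mapIsColimitOfPreservesOfIsColimit (coyoneda.obj (Opposite.op X)) _ _
    (coprodIsCoprod X₁ X₂)
  obtain ⟨-, -, hcompl⟩ := (Types.binaryCofan_isColimit_iff _).1 ⟨hc⟩
  have hmem := hcompl.codisjoint.top_le (Set.mem_univ e.hom)
  rcases hmem with ⟨g, hg⟩ | ⟨g, hg⟩
  · change X ⟶ X₁ at g
    replace hg : g ≫ coprod.inl = e.hom := hg
    have h₂ : Nonempty (IsInitial X₂) :=
      aux_disjoint (coprod.inr ≫ e.inv ≫ g) (𝟙 X₂) (by simp [hg])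
    exact Or.inl ⟨fun h => hne ⟨h, h₂⟩, fun h => h h₂⟩
  · change X ⟶ X₂ at g
    replace hg : g ≫ coprod.inr = e.hom := hg
    have h₁ : Nonempty (IsInitial X₁) :=
      aux_disjoint (𝟙 X₁) (coprod.inl ≫ e.inv ≫ g) (by simp [hg])
    exact Or.inr ⟨fun h => hne ⟨h₁, h⟩, fun h => h h₁⟩

theorem aux_factor {C : Type u} [Category.{v} C] [FinitaryExtensive C] (X : C)
    (H : ∀ (X₁ X₂ : C), (X ≅ X₁ ⨿ X₂) →
        Xor' (¬ Nonempty (IsInitial X₁)) (¬ Nonempty (IsInitial X₂)))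
    {Y Z : C} (f : X ⟶ Y ⨿ Z) :
    (∃ g : X ⟶ Y, g ≫ coprod.inl = f) ∨ (∃ g : X ⟶ Z, g ≫ coprod.inr = f) := by
  have hvk := FinitaryExtensive.vanKampen _ (coprodIsCoprod Y Z)
  rw [BinaryCofan.isVanKampen_iff] at hvk
  have hl : IsPullback (pullback.snd coprod.inl f) (pullback.fst coprod.inl f) f coprod.inl :=
    (IsPullback.of_hasPullback (coprod.inl : Y ⟶ Y ⨿ Z) f).flip
  have hr : IsPullback (pullback.snd coprod.inr f) (pullback.fst coprod.inr f) f coprod.inr :=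
    (IsPullback.of_hasPullback (coprod.inr : Z ⟶ Y ⨿ Z) f).flip
  obtain ⟨hc⟩ := (hvk (BinaryCofan.mk (pullback.snd coprod.inl f) (pullback.snd coprod.inr f))
    (pullback.fst coprod.inl f) (pullback.fst coprod.inr f) f hl.w.symm hr.w.symm).2 ⟨hl, hr⟩
  rcases H _ _ (hc.coconePointUniqueUpToIso (colimit.isColimit _)) with ⟨-, h⟩ | ⟨-, h⟩
  · obtain ⟨h⟩ := not_not.1 h
    have hi : IsIso (pullback.snd coprod.inl f) :=
      (BinaryCofan.isColimit_iff_isIso_inl h _).1 ⟨hc⟩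
    refine Or.inl ⟨inv (pullback.snd coprod.inl f) ≫ pullback.fst coprod.inl f, ?_⟩
    rw [Category.assoc, ← hl.w, IsIso.inv_hom_id_assoc]
  · obtain ⟨h⟩ := not_not.1 h
    have hi : IsIso (pullback.snd coprod.inr f) :=
      (BinaryCofan.isColimit_iff_isIso_inr h _).1 ⟨hc⟩
    refine Or.inr ⟨inv (pullback.snd coprod.inr f) ≫ pullback.fst coprod.inr f, ?_⟩
    rw [Category.assoc, ← hr.w, IsIso.inv_hom_id_assoc]

theorem aux_backward {C : Type u} [Category.{v} C] [FinitaryExtensive C] (X : C)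
    (H : ∀ (X₁ X₂ : C), (X ≅ X₁ ⨿ X₂) →
        Xor' (¬ Nonempty (IsInitial X₁)) (¬ Nonempty (IsInitial X₂)))
    (J : Type) [Finite J] :
    PreservesColimitsOfShape (Discrete J) (coyoneda.obj (Opposite.op X)) := by
  have hX : ¬ Nonempty (IsInitial X) := by
    have hi : IsIso (coprod.inl : X ⟶ X ⨿ (⊥_ C)) :=
      (BinaryCofan.isColimit_iff_isIso_inl initialIsInitial (BinaryCofan.mk _ _)).1
        ⟨coprodIsCoprod X (⊥_ C)⟩
    rcases H X (⊥_ C) (asIso coprod.inl) with ⟨h, -⟩ | ⟨h, -⟩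
    · exact h
    · exact absurd ⟨initialIsInitial⟩ h
  have hE : IsEmpty (X ⟶ ⊥_ C) := ⟨fun f => hX (aux_initial_of_hom initialIsInitial f)⟩
  have h0 : PreservesColimit (Functor.empty.{0} C) (coyoneda.obj (Opposite.op X)) := by
    obtain ⟨hI⟩ := (Types.initial_iff_empty ((coyoneda.obj (Opposite.op X)).obj (⊥_ C))).2 hE
    exact preservesInitial_of_iso _ (initialIsInitial.uniqueUpToIso hI)
  have h0' := preservesColimitsOfShape_pempty_of_preservesInitial (coyoneda.obj (Opposite.op X))
  have h2 : ∀ Y Z : C, PreservesColimit (pair Y Z) (coyoneda.obj (Opposite.op X)) := by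
    intro Y Z
    refine preservesColimit_of_preserves_colimit_cocone (coprodIsCoprod Y Z) ?_
    refine (isColimitMapCoconeBinaryCofanEquiv _ _ _).symm (Nonempty.some ?_)
    rw [Types.binaryCofan_isColimit_iff]
    refine ⟨?_, ?_, ?_, ?_⟩
    · intro a b hab
      exact (cancel_mono (coprod.inl : Y ⟶ Y ⨿ Z)).1 hab
    · intro a b hab
      exact (cancel_mono (coprod.inr : Z ⟶ Y ⨿ Z)).1 hab
    · rw [Set.disjoint_left]
      rintro _ ⟨a, rfl⟩ ⟨b, hb⟩
      exact hX (aux_disjoint a b (Eq.symm hb))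
    · rw [codisjoint_iff_le_sup]
      intro f _
      exact aux_factor X H f
  have h2' : PreservesColimitsOfShape (Discrete WalkingPair) (coyoneda.obj (Opposite.op X)) :=
    ⟨fun {K} => preservesColimit_of_iso_diagram _ (diagramIsoPair K).symm⟩
  exact PreservesFiniteCoproducts.of_preserves_binary_and_initial _ J

/-- In a finitary extensive category, `Hom(X, -)` preserves finite coproducts iff in every
binary coproduct decomposition of `X` exactly one of the two summands is not initial. -/
theorem connected_iff_exactly_one_summand_not_initial {C : Type u} [Category.{v} C]
    [FinitaryExtensive C] (X : C) :
    (∀ (J : Type) [Finite J],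
        PreservesColimitsOfShape (Discrete J) (coyoneda.obj (Opposite.op X))) ↔
      ∀ (X₁ X₂ : C), (X ≅ X₁ ⨿ X₂) →
        Xor' (¬ Nonempty (IsInitial X₁)) (¬ Nonempty (IsInitial X₂)) := by
  exact ⟨fun H X₁ X₂ e => aux_forward X H X₁ X₂ e, fun H J _ => aux_backward X H J⟩
end
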